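/- Suppose F satisfies (G1) and (G2) and the Perron–Frobenius operator P_σ of the base shift has spectral gap on d_θ-Lipschitz functions. Let μ₀ be the unique F-invariant probability measure in S^∞. Then μ₀ ∈ L_θ^+ and its Lipschitz disintegration constant satisfies |μ₀|_θ ≤ C₁/(1−θ), where C₁ = max{Hθ + θN|g|_θ, 2}. -/

import Mathlib

open MeasureTheory ENNReal Set

namespace RDS

/-- The one-sided subshift of finite type `Σ_A^+` determined by the 0-1 matrix `A`. -/
abbrev SigmaA (N : ℕ) (A : Fin N → Fin N → Bool) :=
  {x : ℕ → Fin N // ∀ i, A (x i) (x (i + 1)) = true}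

variable {N : ℕ} {A : Fin N → Fin N → Bool}

/-- The shift map `σ` on `Σ_A^+`. -/
def shift (x : SigmaA N A) : SigmaA N A :=
  ⟨fun i => x.val (i + 1), fun i => x.prop (i + 1)⟩

/-- Aperiodicity of a 0-1 matrix: some power has all entries positive. -/
def Aperiodic (A : Fin N → Fin N → Bool) : Prop :=
  ∃ k : ℕ, 0 < k ∧ ∀ i j,
    0 < ((Matrix.of fun a b => if A a b then (1 : ℕ) else 0) ^ k) i j

/-- The metric `d_θ(x,y) = Σ_i θ^i (1 - δ(x_i, y_i))` on `Σ_A^+`. -/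
noncomputable def dTheta (θ : ℝ) (x y : SigmaA N A) : ℝ :=
  ∑' i : ℕ, θ ^ i * (if x.val i = y.val i then (0 : ℝ) else 1)

/-- Cylinder sets of `Σ_A^+`. -/
def cylinder (n : ℕ) (w : Fin (n + 1) → Fin N) : Set (SigmaA N A) :=
  {x | ∀ i : Fin (n + 1), x.val i = w i}

/-- `m` is a Markov measure on `Σ_A^+` compatible with `A`: it is given on
cylinders by a stochastic matrix `P` (vanishing where `A` vanishes) and a
stationary probability vector `p`. -/
def IsMarkov (m : Measure (SigmaA N A)) : Prop :=
  ∃ (p : Fin N → ℝ≥0∞) (P : Fin N → Fin N → ℝ≥0∞),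
    (∑ i, p i = 1) ∧ (∀ i, ∑ j, P i j = 1) ∧ (∀ j, ∑ i, p i * P i j = p j) ∧
    (∀ i j, A i j = false → P i j = 0) ∧
    ∀ (n : ℕ) (w : Fin (n + 1) → Fin N),
      m (cylinder n w) = p (w 0) * ∏ i : Fin n, P (w i.castSucc) (w i.succ)

/-- `σ_i⁻¹(γ)`: the sequence `γ` with the symbol `i` prepended
(defined when `A i γ₀ = 1`), i.e. the inverse branch of the restriction `σ_i`
of `σ` to the cylinder `[i]`. -/
def prepend (i : Fin N) (x : SigmaA N A) (h : A i (x.val 0) = true) : SigmaA N A :=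
  ⟨fun n => match n with
    | 0 => i
    | Nat.succ k => x.val k,
   fun j => match j with
    | 0 => h
    | Nat.succ k => x.prop k⟩

/-- `f` is `L`-Lipschitz with respect to the distance function `d`. -/
def LipWithD {X : Type*} (d : X → X → ℝ) (L : ℝ) (f : X → ℝ) : Prop :=
  ∀ x y, |f x - f y| ≤ L * d x y

/-- `f` is Lipschitz with respect to the distance function `d`. -/
def LipD {X : Type*} (d : X → X → ℝ) (f : X → ℝ) : Prop :=
  ∃ L : ℝ, LipWithD d L f

/-- The best Lipschitz constant of `f` with respect to `d` (valued in `ℝ≥0∞`). -/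
noncomputable def lipConst {X : Type*} (d : X → X → ℝ) (f : X → ℝ) : ℝ≥0∞ :=
  ⨆ (x : X) (y : X), ENNReal.ofReal (|f x - f y| / d x y)

/-- The sup norm of `f` (valued in `ℝ≥0∞`). -/
noncomputable def supNormE {X : Type*} (f : X → ℝ) : ℝ≥0∞ :=
  ⨆ x : X, ENNReal.ofReal |f x|

/-- The norm `‖f‖_θ = ‖f‖_∞ + Lip_d(f)`. -/
noncomputable def thetaNorm {X : Type*} (d : X → X → ℝ) (f : X → ℝ) : ℝ≥0∞ :=
  supNormE f + lipConst d f

/-- The Perron-Frobenius operator duality characterizing `P_σ`: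
`∫ P_σ(φ) · ψ dm = ∫ φ · (ψ ∘ σ) dm` for integrable `φ` and bounded measurable `ψ`. -/
def IsPerronFrobenius (m : Measure (SigmaA N A))
    (Pσ : (SigmaA N A → ℝ) → SigmaA N A → ℝ) : Prop :=
  ∀ φ ψ : SigmaA N A → ℝ, Integrable φ m → Measurable ψ → (∃ C, ∀ x, |ψ x| ≤ C) →
    ∫ x, Pσ φ x * ψ x ∂m = ∫ x, φ x * ψ (shift x) ∂m

/-- Spectral gap for `P_σ` on `d_θ`-Lipschitz functions with constants `D`, `r`:
`‖P_σ^n φ‖_θ ≤ D r^n ‖φ‖_θ` for all `n` and all `d_θ`-Lipschitz `φ` with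
`∫ φ dm = 0`. -/
def HasGap (m : Measure (SigmaA N A)) (θ : ℝ)
    (Pσ : (SigmaA N A → ℝ) → SigmaA N A → ℝ) (D r : ℝ) : Prop :=
  ∀ φ : SigmaA N A → ℝ, LipD (dTheta θ) φ → (∫ x, φ x ∂m) = 0 →
    ∀ n : ℕ, thetaNorm (dTheta θ) (Pσ^[n] φ) ≤
      ENNReal.ofReal (D * r ^ n) * thetaNorm (dTheta θ) φ

/-- `Jm i` is the Jacobian `J_{m,σ_i}` of `m` with respect to the branch `σ_i`
(the restriction of `σ` to the cylinder `[i]`): `m (σ_i(E)) = ∫_E J_{m,σ_i} dm`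
for every measurable `E` (intersected with `[i]`). -/
def IsJacobian (m : Measure (SigmaA N A)) (Jm : Fin N → SigmaA N A → ℝ) : Prop :=
  ∀ (i : Fin N) (E : Set (SigmaA N A)), MeasurableSet E →
    m {γ : SigmaA N A | ∃ h : A i (γ.val 0) = true, prepend i γ h ∈ E} =
      ∫⁻ x in E ∩ {x : SigmaA N A | x.val 0 = i}, ENNReal.ofReal (Jm i x) ∂m

variable {K : Type*} [MetricSpace K] [MeasurableSpace K]

/-- The Wasserstein-Kantorovich like distance `W(ν₁,ν₂)`: the supremum of
`|∫ g dν₁ - ∫ g dν₂|` over `g : K → ℝ` with `Lip(g) ≤ 1` and `‖g‖_∞ ≤ 1`.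
Applied with `ν₂ = 0` it gives the norm `‖ν₁‖_W`; applied to the two parts of a
decomposition of a signed measure it gives its `‖·‖_W` norm. -/
noncomputable def wDist (ν₁ ν₂ : Measure K) : ℝ≥0∞ :=
  ⨆ g : {g : K → ℝ // LipschitzWith 1 g ∧ ∀ z, |g z| ≤ 1},
    ENNReal.ofReal |∫ z, g.val z ∂ν₁ - ∫ z, g.val z ∂ν₂|

/-- The skew product `F(x,z) = (σ(x), G(x,z))`. -/
def skew (G : SigmaA N A × K → K) (p : SigmaA N A × K) : SigmaA N A × K :=
  (shift p.1, G p)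

/-- The transfer operator `F^* μ (E) = μ (F⁻¹ E)` acting on signed measures. -/
noncomputable def transfer (G : SigmaA N A × K → K)
    (μ : SignedMeasure (SigmaA N A × K)) : SignedMeasure (SigmaA N A × K) :=
  μ.map (skew G)

/-- Condition (G1): uniform contraction of the vertical fibers with rate `α`. -/
def CondG1 (G : SigmaA N A × K → K) (α : ℝ) : Prop :=
  ∀ (x : SigmaA N A) (z₁ z₂ : K), dist (G (x, z₁)) (G (x, z₂)) ≤ α * dist z₁ z₂

/-- Condition (G2): `x ↦ G(x,z)` is `d_θ`-Lipschitz with constant `H`,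
uniformly in `z`. -/
def CondG2 (θ : ℝ) (G : SigmaA N A × K → K) (H : ℝ) : Prop :=
  ∀ (z : K) (x y : SigmaA N A), dist (G (x, z)) (G (y, z)) ≤ H * dTheta θ x y

/-- `T` is (the path `γ ↦ μ|_γ` of) a disintegration of `μ` along the vertical
fibers, over the reference measure `m`: `μ(E) = ∫ (μ|_γ)(E ∩ γ) dm(γ)`. -/
def IsDisint (m : Measure (SigmaA N A)) (μ : Measure (SigmaA N A × K))
    (T : SigmaA N A → Measure K) : Prop :=
  (∀ E : Set (SigmaA N A × K), MeasurableSet E →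
      μ E = ∫⁻ γ, T γ {z | (γ, z) ∈ E} ∂m) ∧
  ∀ E : Set K, MeasurableSet E → Measurable fun γ => T γ E

/-- The (essential) `‖·‖_W`-Lipschitz constant of a path of measures,
`|Γ|_θ^ω = ess sup_{γ₁ ≠ γ₂} ‖Γ(γ₁) - Γ(γ₂)‖_W / d_θ(γ₁,γ₂)`. -/
noncomputable def pathLip (m : Measure (SigmaA N A)) (θ : ℝ)
    (T : SigmaA N A → Measure K) : ℝ≥0∞ :=
  essSup (fun p : SigmaA N A × SigmaA N A =>
    wDist (T p.1) (T p.2) / ENNReal.ofReal (dTheta θ p.1 p.2)) (m.prod m)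

/-- The Lipschitz constant `|μ|_θ` of a positive measure: the infimum over
disintegrations `ω` of `μ` of `|μ|_θ^ω`. -/
noncomputable def lipDisint (m : Measure (SigmaA N A)) (θ : ℝ)
    (μ : Measure (SigmaA N A × K)) : ℝ≥0∞ :=
  ⨅ T : {T : SigmaA N A → Measure K // IsDisint m μ T}, pathLip m θ T.val

/-- The fiberwise transfer formula: the path representing `F^*μ` induced by the
path `T` representing `μ`, i.e.
`γ ↦ Σ_i 1_{σ([i])}(γ) (F_{iγ})_*(T(iγ)) / J_{m,σ_i}(iγ)`. -/
noncomputable def transferPath (G : SigmaA N A × K → K) (Jm : Fin N → SigmaA N A → ℝ)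
    (T : SigmaA N A → Measure K) : SigmaA N A → Measure K :=
  fun γ => ∑ i : Fin N, if h : A i (γ.val 0) = true then
      ENNReal.ofReal ((Jm i (prepend i γ h))⁻¹) •
        ((T (prepend i γ h)).map fun z => G (prepend i γ h, z))
    else 0

variable [BorelSpace K] [CompactSpace K] [Nonempty K]

/-- The fiberwise restriction `μ|_γ = π₂_* (φ₁(γ) μ_γ)` of a finite positive
measure `μ` on `Σ_A^+ × K`, where `({μ_γ}_γ, φ₁ m)` is the Rokhlin
disintegration of `μ` along the vertical fibers and `φ₁ = d(π₁_*μ)/dm`. -/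
noncomputable def fiberR (m : Measure (SigmaA N A))
    (μ : Measure (SigmaA N A × K)) (γ : SigmaA N A) : Measure K := by
  by_cases h : IsFiniteMeasure μ
  · haveI := h
    exact (μ.fst.rnDeriv m γ) • μ.condKernel γ
  · exact 0

/-- The norm `‖μ‖_∞ = ess sup_γ ‖μ|_γ‖_W` of a signed measure written as a
difference `μ = μ₁ - μ₂` of positive measures. -/
noncomputable def infNormPair (m : Measure (SigmaA N A))
    (μ₁ μ₂ : Measure (SigmaA N A × K)) : ℝ≥0∞ :=
  essSup (fun γ => wDist (fiberR m μ₁ γ) (fiberR m μ₂ γ)) m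

/-- The marginal density `φ₁ = d(π₁_*μ)/dm` of the signed measure `μ = μ₁ - μ₂`. -/
noncomputable def phiPair (m : Measure (SigmaA N A))
    (μ₁ μ₂ : Measure (SigmaA N A × K)) (γ : SigmaA N A) : ℝ :=
  (μ₁.fst.rnDeriv m γ).toReal - (μ₂.fst.rnDeriv m γ).toReal

/-- Membership in `AB`: both parts are finite with first marginal absolutely
continuous with respect to `m`. -/
def MemABPair (m : Measure (SigmaA N A)) (μ₁ μ₂ : Measure (SigmaA N A × K)) : Prop :=
  μ₁.fst ≪ m ∧ μ₂.fst ≪ m ∧ IsFiniteMeasure μ₁ ∧ IsFiniteMeasure μ₂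

/-- Membership in `S^∞`: `μ ∈ AB`, `‖μ‖_∞ < ∞` and the marginal density `φ₁`
has a `d_θ`-Lipschitz version. -/
def MemSPair (m : Measure (SigmaA N A)) (θ : ℝ)
    (μ₁ μ₂ : Measure (SigmaA N A × K)) : Prop :=
  MemABPair m μ₁ μ₂ ∧ infNormPair m μ₁ μ₂ < ⊤ ∧
    ∃ ψ : SigmaA N A → ℝ, ψ =ᵐ[m] phiPair m μ₁ μ₂ ∧ LipD (dTheta θ) ψ

/-- `‖φ₁‖_θ`, computed on the best version of the marginal density. -/
noncomputable def thetaNormMu (m : Measure (SigmaA N A)) (θ : ℝ)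
    (μ₁ μ₂ : Measure (SigmaA N A × K)) : ℝ≥0∞ :=
  ⨅ ψ : {ψ : SigmaA N A → ℝ // ψ =ᵐ[m] phiPair m μ₁ μ₂}, thetaNorm (dTheta θ) ψ.val

/-- The norm `‖μ‖_{S^∞} = ‖φ₁‖_θ + ‖μ‖_∞`. -/
noncomputable def sNormPair (m : Measure (SigmaA N A)) (θ : ℝ)
    (μ₁ μ₂ : Measure (SigmaA N A × K)) : ℝ≥0∞ :=
  thetaNormMu m θ μ₁ μ₂ + infNormPair m μ₁ μ₂

/-- Positive part of a signed measure. -/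
noncomputable def jPos {X : Type*} [MeasurableSpace X] (μ : SignedMeasure X) : Measure X :=
  μ.toJordanDecomposition.posPart

/-- Negative part of a signed measure. -/
noncomputable def jNeg {X : Type*} [MeasurableSpace X] (μ : SignedMeasure X) : Measure X :=
  μ.toJordanDecomposition.negPart

/-- Membership in `AB` for signed measures. -/
def MemAB (m : Measure (SigmaA N A)) (μ : SignedMeasure (SigmaA N A × K)) : Prop :=
  MemABPair m (jPos μ) (jNeg μ)

/-- Membership in `S^∞` for signed measures. -/
def MemS (m : Measure (SigmaA N A)) (θ : ℝ) (μ : SignedMeasure (SigmaA N A × K)) : Prop :=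
  MemSPair m θ (jPos μ) (jNeg μ)

/-- `‖μ‖_∞` for signed measures. -/
noncomputable def infNorm (m : Measure (SigmaA N A))
    (μ : SignedMeasure (SigmaA N A × K)) : ℝ≥0∞ :=
  infNormPair m (jPos μ) (jNeg μ)

/-- `‖μ‖_{S^∞}` for signed measures. -/
noncomputable def sNorm (m : Measure (SigmaA N A)) (θ : ℝ)
    (μ : SignedMeasure (SigmaA N A × K)) : ℝ≥0∞ :=
  sNormPair m θ (jPos μ) (jNeg μ)

/-- `‖φ₁‖_∞` of the marginal density of a signed measure. -/
noncomputable def phiSup (m : Measure (SigmaA N A))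
    (μ : SignedMeasure (SigmaA N A × K)) : ℝ≥0∞ :=
  essSup (fun γ => ENNReal.ofReal |phiPair m (jPos μ) (jNeg μ) γ|) m

/-!
The spectral gap makes the correlations of `φ₁ - 1` with any indicator along the shift tend to `0`;
since `m` and `φ₁ m` are both invariant these correlations are constant, so `φ₁ = 1` and `μ₀` has
marginal `m`. Its conditional measures `T γ` are then a disintegration over `m`, and invariance of
`μ₀` becomes the identity `T γ = Σ_i w_i(γ) G(iγ, ·)_* T(iγ)` with `w_i(γ) = 1 / J_{m,σ_i}(iγ)`,
valid on a set of full measure that contains `iγ` whenever it contains `γ`.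

Let `g` be `L`-Lipschitz with `L ≤ 1` and `|g| ≤ 1`. If `x₀ = y₀`, the identity splits the
difference `∫ g d(T x) - ∫ g d(T y)` into the change of the weights, at most `θ N |g|_θ d(x,y)`,
the change of the fiber maps, at most `H θ d(x,y)`, and an average of the same differences for the
`α L`-Lipschitz functions `g ∘ G(iy, ·)` at the points `ix`, `iy`, whose distance is `θ d(x,y)`. If
`x₀ ≠ y₀`, the difference is at most `2 ≤ C₁ d(x,y)`. The constant `B = C₁ / (1 - θ)` solves
`C₁ + θ B = B`, so `n` iterations bound the difference by `B d(x,y) + L α^n diam K`.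
-/

section SymbolicMetric

variable {θ : ℝ}

theorem norm_dTheta_term_le (hθ0 : 0 ≤ θ) (x y : SigmaA N A) (i : ℕ) :
    ‖θ ^ i * (if x.val i = y.val i then (0 : ℝ) else 1)‖ ≤ θ ^ i := by
  have := pow_nonneg hθ0 i
  split_ifs <;> simp [this, abs_of_nonneg hθ0]

theorem summable_dTheta_term (hθ0 : 0 ≤ θ) (hθ1 : θ < 1) (x y : SigmaA N A) :
    Summable fun i : ℕ => θ ^ i * (if x.val i = y.val i then (0 : ℝ) else 1) :=
  .of_norm_bounded (summable_geometric_of_lt_one hθ0 hθ1) (norm_dTheta_term_le hθ0 x y)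

theorem dTheta_nonneg (hθ0 : 0 ≤ θ) (x y : SigmaA N A) : 0 ≤ dTheta θ x y :=
  tsum_nonneg fun _ => by positivity

theorem dTheta_self (θ : ℝ) (x : SigmaA N A) : dTheta θ x x = 0 := by
  simp [dTheta]

theorem dTheta_le (hθ0 : 0 ≤ θ) (hθ1 : θ < 1) (x y : SigmaA N A) :
    dTheta θ x y ≤ (1 - θ)⁻¹ := by
  rw [← tsum_geometric_of_lt_one hθ0 hθ1]
  exact (summable_dTheta_term hθ0 hθ1 x y).tsum_le_tsum
    (fun i => (le_abs_self _).trans (norm_dTheta_term_le hθ0 x y i))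
    (summable_geometric_of_lt_one hθ0 hθ1)

theorem pow_le_dTheta (hθ0 : 0 ≤ θ) (hθ1 : θ < 1) {x y : SigmaA N A} {i : ℕ}
    (hi : x.val i ≠ y.val i) : θ ^ i ≤ dTheta θ x y := by
  simpa [dTheta, hi] using (summable_dTheta_term hθ0 hθ1 x y).le_tsum i fun _ _ => by positivity

theorem one_le_dTheta (hθ0 : 0 ≤ θ) (hθ1 : θ < 1) {x y : SigmaA N A}
    (h : x.val 0 ≠ y.val 0) : 1 ≤ dTheta θ x y := by
  simpa using pow_le_dTheta hθ0 hθ1 h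

theorem dTheta_pos (hθ0 : 0 < θ) (hθ1 : θ < 1) {x y : SigmaA N A} (h : x ≠ y) :
    0 < dTheta θ x y := by
  obtain ⟨i, hi⟩ := Function.ne_iff.1 (Subtype.coe_ne_coe.2 h)
  exact (pow_pos hθ0 i).trans_le (pow_le_dTheta hθ0.le hθ1 hi)

theorem dTheta_prepend (hθ0 : 0 ≤ θ) (hθ1 : θ < 1) (i : Fin N) {x y : SigmaA N A}
    (hx : A i (x.val 0) = true) (hy : A i (y.val 0) = true) :
    dTheta θ (prepend i x hx) (prepend i y hy) = θ * dTheta θ x y := by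
  rw [dTheta, (summable_dTheta_term hθ0 hθ1 _ _).tsum_eq_zero_add, dTheta, ← tsum_mul_left]
  simp only [prepend, if_true, mul_zero, zero_add, pow_succ']
  exact tsum_congr fun j => mul_assoc _ _ _

theorem continuous_coord (i : ℕ) : Continuous fun x : SigmaA N A => x.val i :=
  (continuous_apply i).comp continuous_subtype_val

theorem continuous_dTheta_left (hθ0 : 0 ≤ θ) (hθ1 : θ < 1) (y : SigmaA N A) :
    Continuous fun x => dTheta θ x y :=
  continuous_tsum
    (fun i => (continuous_of_discreteTopology (f := fun a : Fin N =>
      θ ^ i * (if a = y.val i then (0 : ℝ) else 1))).comp (continuous_coord i))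
    (summable_geometric_of_lt_one hθ0 hθ1) fun i x => norm_dTheta_term_le hθ0 x y i

variable {f : SigmaA N A → ℝ}

theorem LipD.continuous (hθ0 : 0 ≤ θ) (hθ1 : θ < 1) (hf : LipD (dTheta θ) f) :
    Continuous f := by
  obtain ⟨L, hL⟩ := hf
  refine continuous_iff_continuousAt.2 fun y => tendsto_iff_dist_tendsto_zero.2 ?_
  have hd : Filter.Tendsto (fun x => L * dTheta θ x y) (nhds y) (nhds 0) := by
    simpa [dTheta_self] using ((continuous_dTheta_left hθ0 hθ1 y).const_mul L).tendsto y
  exact squeeze_zero (fun _ => dist_nonneg) (fun x => hL x y) hd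

theorem LipD.exists_abs_le (hθ0 : 0 ≤ θ) (hθ1 : θ < 1) (hf : LipD (dTheta θ) f) :
    ∃ C, ∀ x, |f x| ≤ C := by
  obtain ⟨L, hL⟩ := hf
  rcases isEmpty_or_nonempty (SigmaA N A) with hempty | ⟨⟨y⟩⟩
  · exact ⟨0, hempty.elim⟩
  refine ⟨|f y| + |L| * (1 - θ)⁻¹, fun x => ?_⟩
  calc |f x| ≤ |f y| + |f x - f y| := by linarith [abs_sub_abs_le_abs_sub (f x) (f y)]
    _ ≤ |f y| + L * dTheta θ x y := by gcongr; exact hL x y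
    _ ≤ |f y| + |L| * (1 - θ)⁻¹ := by
      gcongr
      · exact dTheta_nonneg hθ0 x y
      · exact le_abs_self L
      · exact dTheta_le hθ0 hθ1 x y

theorem LipD.integrable (hθ0 : 0 ≤ θ) (hθ1 : θ < 1) (hf : LipD (dTheta θ) f)
    (m : Measure (SigmaA N A)) [IsFiniteMeasure m] : Integrable f m := by
  obtain ⟨C, hC⟩ := hf.exists_abs_le hθ0 hθ1
  exact .of_bound (hf.continuous hθ0 hθ1).aestronglyMeasurable C (.of_forall hC)

theorem ofReal_abs_le_thetaNorm {X : Type*} (d : X → X → ℝ) (f : X → ℝ) (x : X) :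
    ENNReal.ofReal |f x| ≤ thetaNorm d f :=
  (le_iSup (fun x => ENNReal.ofReal |f x|) x).trans le_self_add

theorem LipD.thetaNorm_lt_top (hθ0 : 0 ≤ θ) (hθ1 : θ < 1) (hf : LipD (dTheta θ) f) :
    thetaNorm (dTheta θ) f < ⊤ := by
  obtain ⟨C, hC⟩ := hf.exists_abs_le hθ0 hθ1
  obtain ⟨L, hL⟩ := hf
  have hsup : supNormE f ≤ ENNReal.ofReal C :=
    iSup_le fun x => ENNReal.ofReal_le_ofReal (hC x)
  have hlip : lipConst (dTheta θ) f ≤ ENNReal.ofReal |L| :=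
    iSup₂_le fun x y => ENNReal.ofReal_le_ofReal <|
      div_le_of_le_mul₀ (dTheta_nonneg hθ0 x y) (abs_nonneg L) <|
        (hL x y).trans (by gcongr; exacts [dTheta_nonneg hθ0 x y, le_abs_self L])
  exact (add_le_add hsup hlip).trans_lt (by simp)

theorem lipD_of_thetaNorm_lt_top (hθ0 : 0 < θ) (hθ1 : θ < 1)
    (hf : thetaNorm (dTheta θ) f < ⊤) : LipD (dTheta θ) f := by
  have hlip : lipConst (dTheta θ) f ≠ ⊤ := (ENNReal.add_lt_top.1 hf).2.ne
  refine ⟨(lipConst (dTheta θ) f).toReal, fun x y => ?_⟩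
  obtain rfl | hxy := eq_or_ne x y
  · simp [dTheta_self]
  rw [← div_le_iff₀ (dTheta_pos hθ0 hθ1 hxy), ← ENNReal.ofReal_le_iff_le_toReal hlip]
  exact le_iSup₂ (f := fun x y => ENNReal.ofReal (|f x - f y| / dTheta θ x y)) x y

end SymbolicMetric

section SpectralGap

variable {θ : ℝ} {m : Measure (SigmaA N A)} {Pσ : (SigmaA N A → ℝ) → SigmaA N A → ℝ}
  {D r : ℝ} {φ ψ : SigmaA N A → ℝ}

theorem measurable_shift : Measurable (shift : SigmaA N A → SigmaA N A) :=
  (measurable_pi_lambda _ fun i => (continuous_coord (i + 1)).measurable).subtype_mk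

theorem IsPerronFrobenius.integral_iterate_mul (hPF : IsPerronFrobenius m Pσ)
    (hφ : ∀ n, Integrable (Pσ^[n] φ) m) (hψ : Measurable ψ) (hψb : ∃ C, ∀ x, |ψ x| ≤ C)
    (n : ℕ) : ∫ x, Pσ^[n] φ x * ψ x ∂m = ∫ x, φ x * ψ (shift^[n] x) ∂m := by
  induction n generalizing ψ with
  | zero => rfl
  | succ n ih =>
    obtain ⟨C, hC⟩ := hψb
    simp only [Function.iterate_succ_apply']
    rw [hPF _ ψ (hφ n) hψ ⟨C, hC⟩]
    exact ih (hψ.comp measurable_shift) ⟨C, fun x => hC (shift x)⟩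

theorem HasGap.thetaNorm_iterate_lt_top (hgap : HasGap m θ Pσ D r) (hθ0 : 0 ≤ θ) (hθ1 : θ < 1)
    (hφ : LipD (dTheta θ) φ) (hφ0 : ∫ x, φ x ∂m = 0) (n : ℕ) :
    thetaNorm (dTheta θ) (Pσ^[n] φ) < ⊤ :=
  (hgap φ hφ hφ0 n).trans_lt <|
    ENNReal.mul_lt_top ENNReal.ofReal_lt_top (hφ.thetaNorm_lt_top hθ0 hθ1)

theorem HasGap.tendsto_thetaNorm_iterate (hgap : HasGap m θ Pσ D r) (hθ0 : 0 ≤ θ) (hθ1 : θ < 1)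
    (hr0 : 0 ≤ r) (hr1 : r < 1) (hφ : LipD (dTheta θ) φ) (hφ0 : ∫ x, φ x ∂m = 0) :
    Filter.Tendsto (fun n => thetaNorm (dTheta θ) (Pσ^[n] φ)) Filter.atTop (nhds 0) := by
  have hrate : Filter.Tendsto (fun n : ℕ => ENNReal.ofReal (D * r ^ n) * thetaNorm (dTheta θ) φ)
      Filter.atTop (nhds 0) := by
    simpa using ENNReal.Tendsto.mul_const (ENNReal.tendsto_ofReal
      ((tendsto_pow_atTop_nhds_zero_of_lt_one hr0 hr1).const_mul D))
      (.inr (hφ.thetaNorm_lt_top hθ0 hθ1).ne)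
  exact tendsto_of_tendsto_of_tendsto_of_le_of_le tendsto_const_nhds hrate
    (fun _ => zero_le) (hgap φ hφ hφ0)

theorem HasGap.tendsto_integral_mul_comp_iterate [IsFiniteMeasure m]
    (hgap : HasGap m θ Pσ D r) (hPF : IsPerronFrobenius m Pσ) (hθ0 : 0 < θ) (hθ1 : θ < 1)
    (hr0 : 0 ≤ r) (hr1 : r < 1) (hφ : LipD (dTheta θ) φ) (hφ0 : ∫ x, φ x ∂m = 0)
    (hψ : Measurable ψ) (hψb : ∃ C, ∀ x, |ψ x| ≤ C) :
    Filter.Tendsto (fun n => ∫ x, φ x * ψ (shift^[n] x) ∂m) Filter.atTop (nhds 0) := by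
  obtain ⟨C, hC⟩ := id hψb
  have hfin := hgap.thetaNorm_iterate_lt_top hθ0.le hθ1 hφ hφ0
  have hint (n : ℕ) : Integrable (Pσ^[n] φ) m :=
    (lipD_of_thetaNorm_lt_top hθ0 hθ1 (hfin n)).integrable hθ0.le hθ1 m
  have hbound (n : ℕ) : ‖∫ x, φ x * ψ (shift^[n] x) ∂m‖ ≤
      (thetaNorm (dTheta θ) (Pσ^[n] φ)).toReal * C * m.real univ := by
    rw [← hPF.integral_iterate_mul hint hψ hψb n]
    refine norm_integral_le_of_norm_le_const (.of_forall fun x => ?_)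
    rw [norm_mul]
    refine mul_le_mul ?_ (hC x) (norm_nonneg _) ENNReal.toReal_nonneg
    exact (ENNReal.ofReal_le_iff_le_toReal (hfin n).ne).1 (ofReal_abs_le_thetaNorm _ _ x)
  have hlim := (ENNReal.tendsto_toReal zero_ne_top).comp
    (hgap.tendsto_thetaNorm_iterate hθ0.le hθ1 hr0 hr1 hφ hφ0)
  exact squeeze_zero_norm hbound (by simpa using (hlim.mul_const C).mul_const (m.real univ))

theorem integral_density_sub_one_mul_indicator {X : Type*} [MeasurableSpace X]
    {μ ν : Measure X} [IsFiniteMeasure μ] [IsFiniteMeasure ν] (hac : ν ≪ μ) {ρ : X → ℝ}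
    (hρ : ρ =ᵐ[μ] fun x => (ν.rnDeriv μ x).toReal) {E : Set X} (hE : MeasurableSet E) :
    ∫ x, (ρ x - 1) * E.indicator 1 x ∂μ = ν.real E - μ.real E := by
  have hind : (fun x => (ρ x - 1) * E.indicator 1 x) = E.indicator fun x => ρ x - 1 := by
    ext x
    by_cases hx : x ∈ E <;> simp [hx]
  have hρi : Integrable ρ μ := Measure.integrable_toReal_rnDeriv.congr hρ.symm
  rw [hind, integral_indicator hE, integral_sub hρi.integrableOn (integrable_const _).integrableOn,
    integral_congr_ae (ae_restrict_of_ae hρ), Measure.setIntegral_toReal_rnDeriv hac]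
  simp

-- Both measures are invariant, so the correlations below do not depend on `n`; they also tend to 0.
theorem HasGap.eq_of_measurePreserving_shift [IsProbabilityMeasure m]
    (hgap : HasGap m θ Pσ D r) (hPF : IsPerronFrobenius m Pσ) (hθ0 : 0 < θ) (hθ1 : θ < 1)
    (hr0 : 0 ≤ r) (hr1 : r < 1) (hm : MeasurePreserving shift m m)
    {ν : Measure (SigmaA N A)} [IsProbabilityMeasure ν] (hν : MeasurePreserving shift ν ν)
    (hac : ν ≪ m) {ρ : SigmaA N A → ℝ} (hρ : ρ =ᵐ[m] fun x => (ν.rnDeriv m x).toReal)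
    (hρL : LipD (dTheta θ) ρ) : ν = m := by
  refine Measure.ext fun E hE => (measureReal_eq_measureReal_iff ..).1 <| sub_eq_zero.1 ?_
  have hdensity {E : Set (SigmaA N A)} := integral_density_sub_one_mul_indicator hac hρ (E := E)
  have hmean : ∫ x, (ρ x - 1) ∂m = 0 := by simpa using hdensity MeasurableSet.univ
  have hLip : LipD (dTheta θ) fun x => ρ x - 1 := by simpa [LipD, LipWithD] using hρL
  have hconst (n : ℕ) : ∫ x, (ρ x - 1) * E.indicator 1 (shift^[n] x) ∂m =
      ν.real E - m.real E := by
    rw [← (hm.iterate n).measureReal_preimage hE.nullMeasurableSet,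
      ← (hν.iterate n).measureReal_preimage hE.nullMeasurableSet]
    exact hdensity ((hm.iterate n).measurable hE)
  have hdecay := hgap.tendsto_integral_mul_comp_iterate hPF hθ0 hθ1 hr0 hr1 hLip hmean
    (measurable_one.indicator hE) ⟨1, fun x => by by_cases hx : x ∈ E <;> simp [hx]⟩
  exact tendsto_nhds_unique tendsto_const_nhds (hdecay.congr hconst)

end SpectralGap

section InverseBranches

open scoped NNReal

/-- The inverse branch `σ_i⁻¹` of the shift, extended by the identity to the points `x` to which
the symbol `i` cannot be prepended, so that it is defined on all of `Σ_A^+`. -/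
def inverseBranch (i : Fin N) (x : SigmaA N A) : SigmaA N A :=
  if h : A i (x.val 0) = true then prepend i x h else x

theorem inverseBranch_eq_prepend {i : Fin N} {x : SigmaA N A} (h : A i (x.val 0) = true) :
    inverseBranch i x = prepend i x h :=
  dif_pos h

theorem shift_inverseBranch {i : Fin N} {x : SigmaA N A} (h : A i (x.val 0) = true) :
    shift (inverseBranch i x) = x := by
  rw [inverseBranch_eq_prepend h]
  rfl

theorem inverseBranch_shift (x : SigmaA N A) : inverseBranch (x.val 0) (shift x) = x := by
  rw [inverseBranch_eq_prepend (x.prop 0)]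
  ext n
  cases n <;> rfl

theorem measurableSet_coord_zero (p : Fin N → Prop) :
    MeasurableSet {x : SigmaA N A | p (x.val 0)} :=
  (continuous_coord 0).measurable (MeasurableSet.of_discrete (s := {j | p j}))

theorem measurable_inverseBranch (i : Fin N) :
    Measurable (inverseBranch i : SigmaA N A → SigmaA N A) := by
  refine Measurable.dite (s := {x : SigmaA N A | A i (x.val 0) = true})
    (f := fun x => prepend i x.1 x.2) (g := fun x => x.1) ?_ measurable_subtype_coe
    (measurableSet_coord_zero fun j => A i j = true)
  refine (measurable_pi_lambda _ fun n => ?_).subtype_mk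
  cases n with
  | zero => exact measurable_const
  | succ k => exact (continuous_coord k).measurable.comp measurable_subtype_coe

theorem image_shift_inter_cylinder (i : Fin N) (E : Set (SigmaA N A)) :
    shift '' (E ∩ {x | x.val 0 = i}) =
      inverseBranch i ⁻¹' E ∩ {x | A i (x.val 0) = true} := by
  ext x
  constructor
  · rintro ⟨y, ⟨hy, rfl⟩, rfl⟩
    exact ⟨by rwa [mem_preimage, inverseBranch_shift], y.prop 0⟩
  · rintro ⟨hx, h⟩
    exact ⟨_, ⟨hx, by rw [inverseBranch_eq_prepend h]; rfl⟩, shift_inverseBranch h⟩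

/-- The weight `1 / J_{m,σ_i}(iγ)` of the `i`-th branch in the Perron-Frobenius operator; it
vanishes where the symbol `i` cannot be prepended. Negative values of `1 / J` are cut off at `0`,
as `ENNReal.ofReal` does in `transferPath`. -/
noncomputable def branchWeight (Jm : Fin N → SigmaA N A → ℝ) (i : Fin N) (x : SigmaA N A) : ℝ≥0 :=
  if A i (x.val 0) = true then ((Jm i (inverseBranch i x))⁻¹).toNNReal else 0

variable {m : Measure (SigmaA N A)} {Jm : Fin N → SigmaA N A → ℝ}

theorem measurable_branchWeight (hJm : ∀ i, Measurable (Jm i)) (i : Fin N) :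
    Measurable (branchWeight Jm i) :=
  .ite (measurableSet_coord_zero fun j => A i j = true)
    ((hJm i).comp (measurable_inverseBranch i)).inv.real_toNNReal measurable_const

theorem branchWeight_le {i : Fin N} {C : ℝ} (hC : ∀ x, |(Jm i x)⁻¹| ≤ C) (x : SigmaA N A) :
    branchWeight Jm i x ≤ C.toNNReal := by
  unfold branchWeight
  split_ifs
  exacts [Real.toNNReal_le_toNNReal ((le_abs_self _).trans (hC _)), zero_le]

theorem dTheta_inverseBranch {θ : ℝ} (hθ0 : 0 ≤ θ) (hθ1 : θ < 1) {i : Fin N} {x y : SigmaA N A}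
    (hx : A i (x.val 0) = true) (hy : A i (y.val 0) = true) :
    dTheta θ (inverseBranch i x) (inverseBranch i y) = θ * dTheta θ x y := by
  rw [inverseBranch_eq_prepend hx, inverseBranch_eq_prepend hy, dTheta_prepend hθ0 hθ1]

theorem abs_branchWeight_sub_le {θ : ℝ} (hθ0 : 0 ≤ θ) (hθ1 : θ < 1) {gLip : ℝ} {i : Fin N}
    (hgLip : LipWithD (dTheta θ) gLip fun x => (Jm i x)⁻¹) {x y : SigmaA N A}
    (hxy : x.val 0 = y.val 0) :
    |(branchWeight Jm i x : ℝ) - branchWeight Jm i y| ≤ gLip * (θ * dTheta θ x y) := by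
  by_cases hx : A i (x.val 0) = true
  · have hy : A i (y.val 0) = true := hxy ▸ hx
    rw [branchWeight, branchWeight, if_pos hx, if_pos hy, ← dTheta_inverseBranch hθ0 hθ1 hx hy]
    exact (abs_max_sub_max_le_abs _ _ _).trans (hgLip _ _)
  · have hy : ¬ A i (y.val 0) = true := hxy ▸ hx
    have hnonneg : 0 ≤ gLip * dTheta θ x y := (abs_nonneg _).trans (hgLip x y)
    rw [branchWeight, branchWeight, if_neg hx, if_neg hy, sub_self, abs_zero, mul_left_comm]
    exact mul_nonneg hθ0 hnonneg

theorem IsJacobian.measure_image_shift (hJ : IsJacobian m Jm) (i : Fin N) {E : Set (SigmaA N A)}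
    (hE : MeasurableSet E) : m (shift '' (E ∩ {x | x.val 0 = i})) =
      ∫⁻ x in E ∩ {x | x.val 0 = i}, ENNReal.ofReal (Jm i x) ∂m := by
  rw [← hJ i E hE, image_shift_inter_cylinder]
  congr 1
  ext x
  exact ⟨fun ⟨hx, h⟩ => ⟨h, inverseBranch_eq_prepend h ▸ hx⟩,
    fun ⟨h, hx⟩ => ⟨by rwa [mem_preimage, inverseBranch_eq_prepend h], h⟩⟩

theorem IsJacobian.measure_image_shift_eq_zero (hJ : IsJacobian m Jm) {E : Set (SigmaA N A)}
    (hE : m E = 0) : m (shift '' E) = 0 := by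
  have hcover : shift '' E ⊆ ⋃ i, shift '' (toMeasurable m E ∩ {x | x.val 0 = i}) := by
    rintro _ ⟨x, hx, rfl⟩
    exact mem_iUnion.2 ⟨x.val 0, x, ⟨subset_toMeasurable m E hx, rfl⟩, rfl⟩
  refine measure_mono_null hcover (measure_iUnion_null fun i => ?_)
  rw [hJ.measure_image_shift i (measurableSet_toMeasurable m E)]
  exact setLIntegral_measure_zero _ _ (measure_mono_null inter_subset_left
    ((measure_toMeasurable E).trans hE))

theorem IsJacobian.exists_ae_mem_preimage_shift_subset (hJ : IsJacobian m Jm)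
    {p : SigmaA N A → Prop} (hp : ∀ᵐ x ∂m, p x) :
    ∃ s : Set (SigmaA N A), (∀ᵐ x ∂m, x ∈ s) ∧ shift ⁻¹' s ⊆ s ∧ ∀ x ∈ s, p x := by
  have hnull (n : ℕ) : m (shift^[n] '' {x | ¬ p x}) = 0 := by
    induction n with
    | zero => simpa using ae_iff.1 hp
    | succ n ih =>
      rw [Function.iterate_succ', image_comp]
      exact hJ.measure_image_shift_eq_zero ih
  refine ⟨{x | ∀ n y, shift^[n] y = x → p y}, ?_, fun x hx n y hy => ?_, fun x hx => hx 0 x rfl⟩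
  · have hnotMem := ae_all_iff.2 fun n => measure_eq_zero_iff_ae_notMem.1 (hnull n)
    filter_upwards [hnotMem] with x hx n y hy
    exact by_contra fun hpy => hx n ⟨y, hpy, hy⟩
  · exact hx (n + 1) y (by rw [Function.iterate_succ_apply', hy])

theorem IsJacobian.ae_restrict_cylinder_pos (hJ : IsJacobian m Jm)
    (hσ : Measure.QuasiMeasurePreserving shift m m) {i : Fin N} (hJm : Measurable (Jm i)) :
    ∀ᵐ x ∂m.restrict {x | x.val 0 = i}, 0 < Jm i x := by
  have hC := measurableSet_coord_zero (A := A) (· = i)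
  have hE : MeasurableSet {x | Jm i x ≤ 0} := hJm measurableSet_Iic
  have hnull : m (shift '' ({x | Jm i x ≤ 0} ∩ {x | x.val 0 = i})) = 0 := by
    rw [hJ.measure_image_shift i hE]
    exact setLIntegral_eq_zero (hE.inter hC) fun x hx => ENNReal.ofReal_of_nonpos hx.1
  rw [ae_restrict_iff' hC]
  refine measure_mono_null (fun x hx => ?_) (hσ.preimage_null hnull)
  simp only [mem_compl_iff, mem_ofPred_eq, Classical.not_imp, not_lt] at hx
  exact mem_image_of_mem shift ⟨hx.2, hx.1⟩

theorem IsJacobian.map_inverseBranch (hJ : IsJacobian m Jm) (i : Fin N) :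
    (m.restrict {x | A i (x.val 0) = true}).map (inverseBranch i) =
      (m.restrict {x | x.val 0 = i}).withDensity fun x => ENNReal.ofReal (Jm i x) := by
  ext E hE
  rw [Measure.map_apply (measurable_inverseBranch i) hE,
    Measure.restrict_apply (measurable_inverseBranch i hE), ← image_shift_inter_cylinder,
    hJ.measure_image_shift i hE, withDensity_apply _ hE, Measure.restrict_restrict hE]

theorem IsJacobian.restrict_cylinder (hJ : IsJacobian m Jm)
    (hσ : Measure.QuasiMeasurePreserving shift m m) {i : Fin N} (hJm : Measurable (Jm i)) :
    m.restrict {x | x.val 0 = i} =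
      ((m.restrict {x | A i (x.val 0) = true}).map (inverseBranch i)).withDensity
        fun x => ENNReal.ofReal (Jm i x)⁻¹ := by
  have hinv : Measurable fun x => ENNReal.ofReal (Jm i x)⁻¹ := hJm.inv.ennreal_ofReal
  rw [hJ.map_inverseBranch, ← withDensity_mul _ hJm.ennreal_ofReal hinv]
  conv_lhs => rw [← withDensity_one (μ := m.restrict {x | x.val 0 = i})]
  refine withDensity_congr_ae ?_
  filter_upwards [hJ.ae_restrict_cylinder_pos hσ hJm] with x hx
  simp [← ENNReal.ofReal_mul hx.le, mul_inv_cancel₀ hx.ne']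

theorem IsJacobian.setLIntegral_cylinder (hJ : IsJacobian m Jm)
    (hσ : Measure.QuasiMeasurePreserving shift m m) {i : Fin N} (hJm : Measurable (Jm i))
    {f : SigmaA N A → ℝ≥0∞} (hf : Measurable f) :
    ∫⁻ x in {x | x.val 0 = i}, f x ∂m =
      ∫⁻ x, branchWeight Jm i x * f (inverseBranch i x) ∂m := by
  have hinv : Measurable fun x => ENNReal.ofReal (Jm i x)⁻¹ := hJm.inv.ennreal_ofReal
  rw [hJ.restrict_cylinder hσ hJm, lintegral_withDensity_eq_lintegral_mul _ hinv hf,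
    lintegral_map (hinv.mul hf) (measurable_inverseBranch i),
    ← lintegral_indicator (measurableSet_coord_zero fun j => A i j = true)]
  refine lintegral_congr fun x => ?_
  by_cases hx : A i (x.val 0) = true <;> simp [branchWeight, hx, ENNReal.ofReal]

theorem IsJacobian.lintegral_eq_lintegral_sum (hJ : IsJacobian m Jm)
    (hσ : Measure.QuasiMeasurePreserving shift m m) (hJm : ∀ i, Measurable (Jm i))
    {f : SigmaA N A → ℝ≥0∞} (hf : Measurable f) :
    ∫⁻ x, f x ∂m = ∫⁻ x, ∑ i, branchWeight Jm i x * f (inverseBranch i x) ∂m := by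
  have hdisj : Pairwise (Function.onFun Disjoint fun i => {x : SigmaA N A | x.val 0 = i}) :=
    fun i j hij => disjoint_left.2 fun x hi hj => hij (hi.symm.trans hj)
  have huniv : ⋃ i, {x : SigmaA N A | x.val 0 = i} = univ :=
    eq_univ_of_forall fun x => mem_iUnion.2 ⟨x.val 0, rfl⟩
  have hmeas (i : Fin N) : Measurable fun x =>
      (branchWeight Jm i x : ℝ≥0∞) * f (inverseBranch i x) :=
    (measurable_branchWeight hJm i).coe_nnreal_ennreal.mul (hf.comp (measurable_inverseBranch i))
  rw [← setLIntegral_univ, ← huniv,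
    lintegral_iUnion (fun i => measurableSet_coord_zero (· = i)) hdisj, tsum_fintype,
    lintegral_finsetSum _ fun i _ => hmeas i]
  exact Finset.sum_congr rfl fun i _ => hJ.setLIntegral_cylinder hσ (hJm i) hf

end InverseBranches

section Disintegration

open ProbabilityTheory

variable {m : Measure (SigmaA N A)} {Y : Type*} [MeasurableSpace Y]
  {G : SigmaA N A × Y → Y} {Jm : Fin N → SigmaA N A → ℝ}

theorem transferPath_eq_sum (G : SigmaA N A × Y → Y) (Jm : Fin N → SigmaA N A → ℝ)
    (T : SigmaA N A → Measure Y) (x : SigmaA N A) :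
    transferPath G Jm T x = ∑ i, branchWeight Jm i x •
      (T (inverseBranch i x)).map fun z => G (inverseBranch i x, z) := by
  refine Finset.sum_congr rfl fun i _ => ?_
  by_cases h : A i (x.val 0) = true
  · rw [dif_pos h, branchWeight, if_pos h, inverseBranch_eq_prepend h]
    rfl
  · rw [dif_neg h, branchWeight, if_neg h, zero_smul]

theorem transferPath_apply (hG : Measurable G) (T : SigmaA N A → Measure Y) (x : SigmaA N A)
    {E : Set Y} (hE : MeasurableSet E) :
    transferPath G Jm T x E = ∑ i, branchWeight Jm i x *
      T (inverseBranch i x) {z | G (inverseBranch i x, z) ∈ E} := by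
  rw [transferPath_eq_sum, Measure.finsetSum_apply]
  refine Finset.sum_congr rfl fun i _ => ?_
  have hsection : Measurable fun z => G (inverseBranch i x, z) := hG.comp measurable_prodMk_left
  rw [Measure.smul_apply, Measure.map_apply hsection hE]
  rfl

/-- The transfer operator on disintegrations: `transferPath` applied to a kernel, as a kernel. -/
noncomputable def transferKernel (hG : Measurable G) (hJm : ∀ i, Measurable (Jm i))
    (κ : Kernel (SigmaA N A) Y) [IsSFiniteKernel κ] : Kernel (SigmaA N A) Y where
  toFun := transferPath G Jm κ
  measurable' := by
    refine Measure.measurable_of_measurable_coe _ fun E hE => ?_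
    simp only [transferPath_apply hG κ _ hE]
    exact Finset.measurable_fun_sum _ fun i _ =>
      (measurable_branchWeight hJm i).coe_nnreal_ennreal.mul
        ((Kernel.measurable_kernel_prodMk_left (hG hE)).comp (measurable_inverseBranch i))

theorem isFiniteKernel_transferKernel (hG : Measurable G) (hJm : ∀ i, Measurable (Jm i))
    {C : Fin N → ℝ} (hC : ∀ i x, |(Jm i x)⁻¹| ≤ C i) (κ : Kernel (SigmaA N A) Y)
    [IsFiniteKernel κ] : IsFiniteKernel (transferKernel hG hJm κ) := by
  refine ⟨⟨∑ i, (C i).toNNReal * κ.bound, by simp [ENNReal.mul_lt_top, κ.bound_lt_top],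
    fun x => ?_⟩⟩
  rw [transferKernel, Kernel.coe_mk, transferPath_apply hG κ x .univ]
  gcongr with i
  exacts [branchWeight_le (hC i) x, κ.measure_le_bound _ _]

theorem IsJacobian.compProd_transferKernel [SFinite m] (hJ : IsJacobian m Jm)
    (hσ : Measure.QuasiMeasurePreserving shift m m) (hG : Measurable G)
    (hJm : ∀ i, Measurable (Jm i)) {C : Fin N → ℝ} (hC : ∀ i x, |(Jm i x)⁻¹| ≤ C i)
    (κ : Kernel (SigmaA N A) Y) [IsFiniteKernel κ] :
    m ⊗ₘ transferKernel hG hJm κ = (m ⊗ₘ κ).map (skew G) := by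
  have := isFiniteKernel_transferKernel hG hJm hC κ
  have hskew : Measurable (skew G) := (measurable_shift.comp measurable_fst).prodMk hG
  ext E hE
  rw [Measure.map_apply hskew hE, Measure.compProd_apply (hskew hE), Measure.compProd_apply hE,
    hJ.lintegral_eq_lintegral_sum hσ hJm (Kernel.measurable_kernel_prodMk_left (hskew hE))]
  refine lintegral_congr fun x => ?_
  rw [transferKernel, Kernel.coe_mk, transferPath_apply hG κ x (measurable_prodMk_left hE)]
  refine Finset.sum_congr rfl fun i _ => ?_
  by_cases h : A i (x.val 0) = true
  · simp only [skew, mem_ofPred_eq, shift_inverseBranch h, preimage]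
  · simp [branchWeight, h]

theorem IsJacobian.ae_eq_transferPath [MeasurableSpace.CountablyGenerated Y]
    [IsFiniteMeasure m] (hJ : IsJacobian m Jm)
    (hσ : Measure.QuasiMeasurePreserving shift m m) (hG : Measurable G)
    (hJm : ∀ i, Measurable (Jm i)) {C : Fin N → ℝ} (hC : ∀ i x, |(Jm i x)⁻¹| ≤ C i)
    {κ : Kernel (SigmaA N A) Y} [IsFiniteKernel κ]
    (hinv : (m ⊗ₘ κ).map (skew G) = m ⊗ₘ κ) :
    ∀ᵐ x ∂m, κ x = transferPath G Jm κ x := by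
  have := isFiniteKernel_transferKernel hG hJm hC κ
  exact Kernel.compProd_eq_iff.1 (hinv.symm.trans (hJ.compProd_transferKernel hσ hG hJm hC κ).symm)

theorem isDisint_compProd [SFinite m] (κ : Kernel (SigmaA N A) Y) [IsSFiniteKernel κ] :
    IsDisint m (m ⊗ₘ κ) κ :=
  ⟨fun _ hE => Measure.compProd_apply hE, fun _ hE => Kernel.measurable_coe κ hE⟩

end Disintegration

section FiberEstimate

open scoped NNReal

theorem abs_integral_le_of_forall_abs_le {X : Type*} [MeasurableSpace X] {μ : Measure X}
    [IsProbabilityMeasure μ] {f : X → ℝ} {c : ℝ} (hf : ∀ x, |f x| ≤ c) : |∫ x, f x ∂μ| ≤ c := by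
  simpa using norm_integral_le_of_norm_le_const (μ := μ) (f := f) (.of_forall hf)

theorem abs_integral_sub_integral_le {X : Type*} [MeasurableSpace X] {μ ν : Measure X}
    [IsProbabilityMeasure μ] [IsProbabilityMeasure ν] {g : X → ℝ} (hg : Measurable g) {c : ℝ}
    (hc : ∀ z w, |g z - g w| ≤ c) : |∫ z, g z ∂μ - ∫ z, g z ∂ν| ≤ c := by
  obtain ⟨z₀⟩ := nonempty_of_isProbabilityMeasure μ
  have hbound (z : X) : |g z| ≤ c + |g z₀| :=
    (sub_le_iff_le_add.1 (abs_sub_abs_le_abs_sub _ _)).trans (by gcongr; exact hc z z₀)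
  have hint (ξ : Measure X) [IsProbabilityMeasure ξ] : Integrable g ξ :=
    .of_bound hg.aestronglyMeasurable _ (.of_forall hbound)
  have hpoint (w : X) : |∫ z, g z ∂μ - g w| ≤ c := by
    simpa [integral_sub (hint μ) (integrable_const _)] using
      abs_integral_le_of_forall_abs_le (μ := μ) fun z => hc z w
  simpa [integral_sub (integrable_const _) (hint ν)] using
    abs_integral_le_of_forall_abs_le (μ := ν) hpoint

theorem abs_sum_mul_sub_sum_mul_le {ι : Type*} [Fintype ι] {v w a b : ι → ℝ} {δ ρ : ℝ}
    (hw : ∀ i, 0 ≤ w i) (hw1 : ∑ i, w i = 1) (ha : ∀ i, |a i| ≤ 1)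
    (hvw : ∀ i, |v i - w i| ≤ δ) (hab : ∀ i, w i ≠ 0 → |a i - b i| ≤ ρ) :
    |∑ i, v i * a i - ∑ i, w i * b i| ≤ Fintype.card ι * δ + ρ := by
  have hterm (i : ι) : |v i * a i - w i * b i| ≤ δ + w i * ρ := by
    have hdiff : |(v i - w i) * a i| ≤ δ := by
      rw [abs_mul]
      exact (mul_le_of_le_one_right (abs_nonneg _) (ha i)).trans (hvw i)
    have hmean : |w i * (a i - b i)| ≤ w i * ρ := by
      rw [abs_mul, abs_of_nonneg (hw i)]
      rcases eq_or_ne (w i) 0 with h0 | h0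
      · simp [h0]
      · exact mul_le_mul_of_nonneg_left (hab i h0) (hw i)
    calc |v i * a i - w i * b i| = |(v i - w i) * a i + w i * (a i - b i)| := by ring_nf
      _ ≤ δ + w i * ρ := (abs_add_le _ _).trans (add_le_add hdiff hmean)
  calc |∑ i, v i * a i - ∑ i, w i * b i| ≤ ∑ i, |v i * a i - w i * b i| := by
        rw [← Finset.sum_sub_distrib]
        exact Finset.abs_sum_le_sum_abs _ _
    _ ≤ ∑ i, (δ + w i * ρ) := Finset.sum_le_sum fun i _ => hterm i
    _ = Fintype.card ι * δ + ρ := by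
      rw [Finset.sum_add_distrib, ← Finset.sum_mul, hw1, one_mul]
      simp

section

variable {Y : Type*} [MeasurableSpace Y] {G : SigmaA N A × Y → Y}
  {Jm : Fin N → SigmaA N A → ℝ} {T : SigmaA N A → Measure Y} [∀ x, IsProbabilityMeasure (T x)]
  {x : SigmaA N A}

theorem sum_branchWeight_eq_one (hG : Measurable G) (hx : T x = transferPath G Jm T x) :
    ∑ i, branchWeight Jm i x = 1 := by
  have htotal : T x univ = ∑ i, (branchWeight Jm i x : ℝ≥0∞) := by
    simp [hx, transferPath_apply hG T x .univ]
  rw [measure_univ] at htotal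
  exact_mod_cast htotal.symm

theorem integral_eq_sum_of_eq_transferPath (hG : Measurable G)
    (hx : T x = transferPath G Jm T x) {g : Y → ℝ} (hg : Measurable g) {C : ℝ}
    (hgC : ∀ z, |g z| ≤ C) :
    ∫ z, g z ∂T x = ∑ i, (branchWeight Jm i x : ℝ) *
      ∫ z, g (G (inverseBranch i x, z)) ∂T (inverseBranch i x) := by
  have hsection (i : Fin N) : Measurable fun z => G (inverseBranch i x, z) :=
    hG.comp measurable_prodMk_left
  rw [hx, transferPath_eq_sum, integral_finsetSum_measure]
  · refine Finset.sum_congr rfl fun i _ => ?_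
    rw [integral_smul_nnreal_measure, NNReal.smul_def, smul_eq_mul,
      integral_map (hsection i).aemeasurable hg.aestronglyMeasurable]
  · intro i _
    have := Measure.isFiniteMeasure_map (T (inverseBranch i x)) fun z => G (inverseBranch i x, z)
    exact .of_bound hg.aestronglyMeasurable C (.of_forall hgC)

end

variable {Y : Type*} [MetricSpace Y] [MeasurableSpace Y] [BorelSpace Y]
  {G : SigmaA N A × Y → Y} {θ H : ℝ}

theorem CondG2.abs_integral_comp_sub_le (hG2 : CondG2 θ G H) (hG : Measurable G)
    {μ : Measure Y} [IsProbabilityMeasure μ] {g : Y → ℝ} (hg : LipschitzWith 1 g)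
    (hg1 : ∀ z, |g z| ≤ 1) (x y : SigmaA N A) :
    |∫ z, g (G (x, z)) ∂μ - ∫ z, g (G (y, z)) ∂μ| ≤ H * dTheta θ x y := by
  have hint (u : SigmaA N A) : Integrable (fun z => g (G (u, z))) μ :=
    .of_bound (hg.continuous.measurable.comp (hG.comp measurable_prodMk_left)).aestronglyMeasurable
      1 (.of_forall fun z => hg1 _)
  rw [← integral_sub (hint x) (hint y)]
  refine abs_integral_le_of_forall_abs_le fun z => ?_
  simpa [Real.dist_eq] using (hg.dist_le_mul _ _).trans (by simpa using hG2 z x y)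

variable {Jm : Fin N → SigmaA N A → ℝ} {T : SigmaA N A → Measure Y}
  [∀ x, IsProbabilityMeasure (T x)] {gLip : ℝ}

theorem abs_integral_sub_le_of_eq_transferPath (hθ0 : 0 ≤ θ) (hθ1 : θ < 1) (hG : Measurable G)
    (hG2 : CondG2 θ G H) (hgLip : ∀ i, LipWithD (dTheta θ) gLip fun x => (Jm i x)⁻¹)
    {g : Y → ℝ} (hg : LipschitzWith 1 g) (hg1 : ∀ z, |g z| ≤ 1) {x y : SigmaA N A}
    (hx : T x = transferPath G Jm T x) (hy : T y = transferPath G Jm T y)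
    (hxy : x.val 0 = y.val 0) {R : ℝ}
    (hR : ∀ i, A i (x.val 0) = true → A i (y.val 0) = true →
      |∫ z, g (G (inverseBranch i y, z)) ∂T (inverseBranch i x) -
        ∫ z, g (G (inverseBranch i y, z)) ∂T (inverseBranch i y)| ≤ R) :
    |∫ z, g z ∂T x - ∫ z, g z ∂T y| ≤ (H * θ + θ * N * gLip) * dTheta θ x y + R := by
  rw [integral_eq_sum_of_eq_transferPath hG hx hg.continuous.measurable hg1,
    integral_eq_sum_of_eq_transferPath hG hy hg.continuous.measurable hg1]
  have hweights : ∑ i, (branchWeight Jm i y : ℝ) = 1 := mod_cast sum_branchWeight_eq_one hG hy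
  have hle_one (i : Fin N) :
      |∫ z, g (G (inverseBranch i x, z)) ∂T (inverseBranch i x)| ≤ 1 :=
    abs_integral_le_of_forall_abs_le fun z => hg1 _
  have hbranch (i : Fin N) (hi : (branchWeight Jm i y : ℝ) ≠ 0) :
      |∫ z, g (G (inverseBranch i x, z)) ∂T (inverseBranch i x) -
        ∫ z, g (G (inverseBranch i y, z)) ∂T (inverseBranch i y)| ≤
          H * (θ * dTheta θ x y) + R := by
    have hyi : A i (y.val 0) = true := by
      by_contra h
      simp [branchWeight, h] at hi
    have hxi : A i (x.val 0) = true := hxy ▸ hyi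
    rw [← dTheta_inverseBranch hθ0 hθ1 hxi hyi]
    exact (abs_sub_le _ _ _).trans
      (add_le_add (hG2.abs_integral_comp_sub_le hG hg hg1 _ _) (hR i hxi hyi))
  refine (abs_sum_mul_sub_sum_mul_le (fun i => NNReal.coe_nonneg _) hweights hle_one
    (fun i => abs_branchWeight_sub_le hθ0 hθ1 (hgLip i) hxy) hbranch).trans_eq ?_
  rw [Fintype.card_fin]
  ring

variable {a : ℝ≥0} {B : ℝ} {s : Set (SigmaA N A)}

theorem abs_integral_sub_le_add_pow [BoundedSpace Y] (hθ0 : 0 ≤ θ) (hθ1 : θ < 1)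
    (hG : Measurable G) (hG1 : ∀ x, LipschitzWith a fun z => G (x, z)) (ha : a ≤ 1)
    (hG2 : CondG2 θ G H) (hgLip : ∀ i, LipWithD (dTheta θ) gLip fun x => (Jm i x)⁻¹)
    (hs : shift ⁻¹' s ⊆ s) (hT : ∀ x ∈ s, T x = transferPath G Jm T x) (hB2 : 2 ≤ B)
    (hB : H * θ + θ * N * gLip + θ * B ≤ B) (n : ℕ) {L : ℝ≥0} (hL : L ≤ 1) {g : Y → ℝ}
    (hg : LipschitzWith L g) (hg1 : ∀ z, |g z| ≤ 1) {x y : SigmaA N A} (hx : x ∈ s)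
    (hy : y ∈ s) :
    |∫ z, g z ∂T x - ∫ z, g z ∂T y| ≤
      B * dTheta θ x y + L * a ^ n * Metric.diam (univ : Set Y) := by
  induction n generalizing L g x y with
  | zero =>
    refine (abs_integral_sub_integral_le hg.continuous.measurable fun z w => ?_).trans
      (le_add_of_nonneg_left (mul_nonneg (by linarith) (dTheta_nonneg hθ0 x y)))
    rw [pow_zero, mul_one]
    exact (hg.dist_le_mul z w).trans (by
      gcongr
      exact Metric.dist_le_diam_of_mem (Bornology.IsBounded.all _) (mem_univ z) (mem_univ w))
  | succ n ih =>
    have hrest : 0 ≤ L * a ^ (n + 1) * Metric.diam (univ : Set Y) := by positivity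
    by_cases hxy : x.val 0 = y.val 0
    · have hinv {i : Fin N} {u : SigmaA N A} (hu : u ∈ s) (h : A i (u.val 0) = true) :
          inverseBranch i u ∈ s := hs (by rwa [mem_preimage, shift_inverseBranch h])
      have hR (i : Fin N) (hxi : A i (x.val 0) = true) (hyi : A i (y.val 0) = true) :
          |∫ z, g (G (inverseBranch i y, z)) ∂T (inverseBranch i x) -
            ∫ z, g (G (inverseBranch i y, z)) ∂T (inverseBranch i y)| ≤
              B * (θ * dTheta θ x y) + L * a * a ^ n * Metric.diam (univ : Set Y) := by
        rw [← dTheta_inverseBranch hθ0 hθ1 hxi hyi]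
        exact_mod_cast ih (mul_le_one' hL ha) (hg.comp (hG1 (inverseBranch i y)))
          (fun z => hg1 _) (hinv hx hxi) (hinv hy hyi)
      calc |∫ z, g z ∂T x - ∫ z, g z ∂T y|
          ≤ (H * θ + θ * N * gLip) * dTheta θ x y +
              (B * (θ * dTheta θ x y) + L * a * a ^ n * Metric.diam (univ : Set Y)) :=
            abs_integral_sub_le_of_eq_transferPath hθ0 hθ1 hG hG2 hgLip (hg.weaken hL) hg1
              (hT x hx) (hT y hy) hxy hR
        _ = (H * θ + θ * N * gLip + θ * B) * dTheta θ x y +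
              L * a ^ (n + 1) * Metric.diam (univ : Set Y) := by ring
        _ ≤ B * dTheta θ x y + L * a ^ (n + 1) * Metric.diam (univ : Set Y) := by
            gcongr
            exact dTheta_nonneg hθ0 x y
    · have htwo : |∫ z, g z ∂T x - ∫ z, g z ∂T y| ≤ 2 := by
        refine abs_integral_sub_integral_le hg.continuous.measurable fun z w => ?_
        linarith [abs_sub (g z) (g w), hg1 z, hg1 w]
      have hBd : B ≤ B * dTheta θ x y :=
        le_mul_of_one_le_right (by linarith) (one_le_dTheta hθ0 hθ1 hxy)
      linarith

theorem wDist_le_of_eq_transferPath [BoundedSpace Y] (hθ0 : 0 ≤ θ) (hθ1 : θ < 1)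
    (hG : Measurable G) (hG1 : ∀ x, LipschitzWith a fun z => G (x, z)) (ha : a < 1)
    (hG2 : CondG2 θ G H) (hgLip : ∀ i, LipWithD (dTheta θ) gLip fun x => (Jm i x)⁻¹)
    (hs : shift ⁻¹' s ⊆ s) (hT : ∀ x ∈ s, T x = transferPath G Jm T x) (hB2 : 2 ≤ B)
    (hB : H * θ + θ * N * gLip + θ * B ≤ B) {x y : SigmaA N A} (hx : x ∈ s) (hy : y ∈ s) :
    wDist (T x) (T y) ≤ ENNReal.ofReal (B * dTheta θ x y) := by
  refine iSup_le fun ⟨g, hg, hg1⟩ => ENNReal.ofReal_le_ofReal ?_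
  have hlim : Filter.Tendsto (fun n => B * dTheta θ x y +
      (1 : ℝ≥0) * (a : ℝ) ^ n * Metric.diam (univ : Set Y)) Filter.atTop
      (nhds (B * dTheta θ x y)) := by
    simpa using ((tendsto_pow_atTop_nhds_zero_of_lt_one a.2 (mod_cast ha)).mul_const
      (Metric.diam (univ : Set Y))).const_add (B * dTheta θ x y)
  exact ge_of_tendsto' hlim fun n => abs_integral_sub_le_add_pow hθ0 hθ1 hG hG1 ha.le hG2 hgLip hs
    hT hB2 hB n le_rfl hg hg1 hx hy

end FiberEstimate

section InvariantMeasure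

open ProbabilityTheory

theorem CondG1.lipschitzWith {Y : Type*} [MetricSpace Y] {G : SigmaA N A × Y → Y} {α : ℝ}
    (hG1 : CondG1 G α) (x : SigmaA N A) : LipschitzWith α.toNNReal fun z => G (x, z) :=
  .of_dist_le' (hG1 x)

theorem phiPair_zero_right {Y : Type*} [MeasurableSpace Y] (m : Measure (SigmaA N A))
    (μ : Measure (SigmaA N A × Y)) :
    phiPair m μ 0 =ᵐ[m] fun x => (μ.fst.rnDeriv m x).toReal := by
  filter_upwards [Measure.rnDeriv_zero m] with x hx
  simp [phiPair, hx]

theorem map_shift_fst_of_map_skew_eq {Y : Type*} [MeasurableSpace Y] {G : SigmaA N A × Y → Y}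
    {μ : Measure (SigmaA N A × Y)} (hG : Measurable G)
    (hinv : μ.map (skew G) = μ) : μ.fst.map shift = μ.fst := by
  have hskew : Measurable (skew G) := (measurable_shift.comp measurable_fst).prodMk hG
  conv_rhs => rw [← hinv]
  rw [Measure.fst, Measure.fst, Measure.map_map measurable_shift measurable_fst,
    Measure.map_map measurable_fst hskew]
  rfl

variable {θ : ℝ} {m : Measure (SigmaA N A)} {Y : Type*} [MetricSpace Y] [MeasurableSpace Y]
  {G : SigmaA N A × Y → Y} {μ : Measure (SigmaA N A × Y)}

theorem pathLip_le (hθ0 : 0 ≤ θ) {T : SigmaA N A → Measure Y} {s : Set (SigmaA N A)}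
    (hs : ∀ᵐ x ∂m, x ∈ s) {B : ℝ}
    (hT : ∀ x ∈ s, ∀ y ∈ s, wDist (T x) (T y) ≤ ENNReal.ofReal (B * dTheta θ x y)) :
    pathLip m θ T ≤ ENNReal.ofReal B := by
  refine essSup_le_of_ae_le _ ?_
  filter_upwards [Measure.quasiMeasurePreserving_fst.ae hs,
    Measure.quasiMeasurePreserving_snd.ae hs] with p hp₁ hp₂
  refine ENNReal.div_le_of_le_mul ?_
  rw [← ENNReal.ofReal_mul' (dTheta_nonneg hθ0 _ _)]
  exact hT p.1 hp₁ p.2 hp₂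

theorem IsDisint.lipDisint_le {T : SigmaA N A → Measure Y} (hT : IsDisint m μ T) :
    lipDisint m θ μ ≤ pathLip m θ T :=
  iInf_le (fun T : {T // IsDisint m μ T} => pathLip m θ T.val) ⟨T, hT⟩

theorem lipDisint_le_of_fst_eq [BorelSpace Y] [StandardBorelSpace Y] [BoundedSpace Y]
    [Nonempty Y] [IsFiniteMeasure m] (hθ0 : 0 ≤ θ) (hθ1 : θ < 1)
    (hσ : Measure.QuasiMeasurePreserving shift m m) (hG : Measurable G) {α : ℝ} (hα : α < 1)
    (hG1 : CondG1 G α) {H : ℝ} (hG2 : CondG2 θ G H) {Jm : Fin N → SigmaA N A → ℝ}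
    (hJ : IsJacobian m Jm) {gLip : ℝ}
    (hgLip : ∀ i, LipWithD (dTheta θ) gLip fun x => (Jm i x)⁻¹)
    (hfst : μ.fst = m) (hinv : μ.map (skew G) = μ) :
    lipDisint m θ μ ≤ ENNReal.ofReal (max (H * θ + θ * N * gLip) 2 / (1 - θ)) := by
  have hg (i : Fin N) : LipD (dTheta θ) fun x => (Jm i x)⁻¹ := ⟨gLip, hgLip i⟩
  have hJm (i : Fin N) : Measurable (Jm i) := by
    simpa only [inv_inv] using ((hg i).continuous hθ0 hθ1).measurable.fun_inv
  choose C hC using fun i => (hg i).exists_abs_le hθ0 hθ1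
  have hμ : IsFiniteMeasure μ := ⟨by rw [← Measure.fst_univ, hfst]; exact measure_lt_top m univ⟩
  have hdisint : m ⊗ₘ μ.condKernel = μ := hfst ▸ μ.disintegrate μ.condKernel
  obtain ⟨s, hsm, hs, hT⟩ := hJ.exists_ae_mem_preimage_shift_subset <|
    hJ.ae_eq_transferPath hσ hG hJm hC (κ := μ.condKernel) (by rwa [hdisint])
  have hpos : 0 < 1 - θ := sub_pos.2 hθ1
  set B := max (H * θ + θ * N * gLip) 2 / (1 - θ)
  have hB2 : 2 ≤ B :=
    (le_div_iff₀ hpos).2 ((by linarith : 2 * (1 - θ) ≤ 2).trans (le_max_right _ _))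
  have hB : H * θ + θ * N * gLip + θ * B ≤ B := by
    have : H * θ + θ * N * gLip ≤ B * (1 - θ) :=
      (le_max_left _ _).trans_eq (div_mul_cancel₀ _ hpos.ne').symm
    linarith
  refine (hdisint ▸ isDisint_compProd μ.condKernel : IsDisint m μ _).lipDisint_le.trans
    (pathLip_le hθ0 hsm fun x hx y hy => ?_)
  exact wDist_le_of_eq_transferPath hθ0 hθ1 hG hG1.lipschitzWith (Real.toNNReal_lt_one.2 hα) hG2
    hgLip hs hT hB2 hB hx hy

end InvariantMeasure

theorem invariant_measure_lipschitz_disintegration_general {θ : ℝ} {m : Measure (SigmaA N A)}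
    [IsProbabilityMeasure m] (hθ0 : 0 < θ) (hθ1 : θ < 1) (hm : m.map shift = m) {Y : Type*}
    [MetricSpace Y] [MeasurableSpace Y] [BorelSpace Y] [StandardBorelSpace Y] [BoundedSpace Y]
    {G : SigmaA N A × Y → Y} (hG : Measurable G) {α : ℝ} (hα : α < 1) (hG1 : CondG1 G α)
    {H : ℝ} (hG2 : CondG2 θ G H) {Pσ : (SigmaA N A → ℝ) → SigmaA N A → ℝ}
    (hPF : IsPerronFrobenius m Pσ) {D r : ℝ} (hr0 : 0 ≤ r) (hr1 : r < 1)
    (hgap : HasGap m θ Pσ D r) {Jm : Fin N → SigmaA N A → ℝ} (hJ : IsJacobian m Jm)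
    {gLip : ℝ} (hgLip : ∀ i, LipWithD (dTheta θ) gLip fun x => (Jm i x)⁻¹)
    {μ : Measure (SigmaA N A × Y)} [IsProbabilityMeasure μ] (hinv : μ.map (skew G) = μ)
    (hac : μ.fst ≪ m) {ρ : SigmaA N A → ℝ} (hρ : ρ =ᵐ[m] fun x => (μ.fst.rnDeriv m x).toReal)
    (hρL : LipD (dTheta θ) ρ) :
    μ.fst = m ∧ lipDisint m θ μ ≤ ENNReal.ofReal (max (H * θ + θ * N * gLip) 2 / (1 - θ)) := by
  have hσ : MeasurePreserving shift m m := ⟨measurable_shift, hm⟩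
  have hfst : μ.fst = m := hgap.eq_of_measurePreserving_shift hPF hθ0 hθ1 hr0 hr1 hσ
    ⟨measurable_shift, map_shift_fst_of_map_skew_eq hG hinv⟩ hac hρ hρL
  have hY : Nonempty Y := (nonempty_of_isProbabilityMeasure μ).map Prod.snd
  exact ⟨hfst, lipDisint_le_of_fst_eq hθ0.le hθ1 hσ.quasiMeasurePreserving hG hα hG1 hG2 hJ hgLip
    hfst hinv⟩

/-- **Lipschitz regularity of the disintegration of `μ₀`.**
Under (G1), (G2) and the spectral gap of `P_σ`, the unique `F`-invariant
probability `μ₀ ∈ S^∞` belongs to `L_θ^+` and `|μ₀|_θ ≤ C₁/(1-θ)` with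
`C₁ = max {Hθ + θN|g|_θ, 2}`. -/
theorem invariant_measure_lipschitz_disintegration
    (N : ℕ) (A : Fin N → Fin N → Bool) (hA : Aperiodic A)
    (θ : ℝ) (hθ0 : 0 < θ) (hθ1 : θ < 1)
    (m : Measure (SigmaA N A)) [IsProbabilityMeasure m]
    (hmM : IsMarkov m) (hminv : m.map shift = m)
    {K : Type*} [MetricSpace K] [CompactSpace K] [Nonempty K]
    [MeasurableSpace K] [BorelSpace K]
    (hdiam : Metric.diam (Set.univ : Set K) = 1)
    (G : SigmaA N A × K → K) (hGm : Measurable (skew G))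
    (α : ℝ) (hα0 : 0 < α) (hα1 : α < 1) (hG1 : CondG1 G α)
    (H : ℝ) (hG2 : CondG2 θ G H)
    (Pσ : (SigmaA N A → ℝ) → SigmaA N A → ℝ) (hPF : IsPerronFrobenius m Pσ)
    (D r : ℝ) (hD : 0 < D) (hr0 : 0 < r) (hr1 : r < 1)
    (hgap : HasGap m θ Pσ D r)
    (Jm : Fin N → SigmaA N A → ℝ) (hJ : IsJacobian m Jm)
    (gLip : ℝ) (hgLip : ∀ i : Fin N, LipWithD (dTheta θ) gLip fun x => (Jm i x)⁻¹)
    (μ₀ : Measure (SigmaA N A × K)) (hprob : IsProbabilityMeasure μ₀)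
    (hinv : μ₀.map (skew G) = μ₀) (hS : MemSPair m θ μ₀ 0) :
    (μ₀.fst ≪ m ∧ lipDisint m θ μ₀ < ⊤) ∧
      lipDisint m θ μ₀ ≤
        ENNReal.ofReal (max (H * θ + θ * (N : ℝ) * gLip) 2 / (1 - θ)) := by
  obtain ⟨⟨hac, -⟩, -, ψ, hψ, hψL⟩ := hS
  have hle := (invariant_measure_lipschitz_disintegration_general hθ0 hθ1 hminv
    (measurable_snd.comp hGm) hα1 hG1 hG2 hPF hr0.le hr1 hgap hJ hgLip hinv hac
    (hψ.trans (phiPair_zero_right m μ₀)) hψL).2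
  exact ⟨⟨hac, hle.trans_lt ENNReal.ofReal_lt_top⟩, hle⟩

end RDS
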